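/- Let S ⊆ ℝ^d be a compact, countably H^n-rectifiable set, and assume there exist γ > 0 and a finite Borel measure η on ℝ^d with η ≪ H^n such that η(B_r(x)) ≥ γ r^n for all x ∈ S and all r ∈ (0,1). Then for every r with 0 < r < 2 one has H^d(S_{⊕r}) ≤ (η(ℝ^d)/γ) · 2^n · 4^d · b_d · r^{d−n}. -/

import Mathlib

/-!
The proof is a packing and covering argument. Choose a maximal subset `N` of the compact set `S`
whose points are pairwise at distance greater than `r`; it is finite because packing numbers of
compact sets are finite (`packingNumber_ne_top_of_isCompact`). The closed balls of radius
`r / 2 < 1` around `N` are disjoint, each of `η`-mass at least `γ (r / 2) ^ n`, so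
`#N ≤ (η univ / γ) 2 ^ n r ^ (-n)`. By maximality the balls of radius `r` around `N` cover `S`,
so those of radius `2 r` cover the `r`-neighbourhood, whose volume is therefore at most
`#N * b_d (2 r) ^ d`. This gives the bound with `2 ^ d` in place of `4 ^ d`.
-/

open MeasureTheory Metric Set Filter
open scoped ENNReal NNReal Topology

/-- Volume of the unit ball in `ℝ^k`. -/
noncomputable def unitBallVol (k : ℕ) : ℝ :=
  Real.pi ^ ((k : ℝ) / 2) / Real.Gamma ((k : ℝ) / 2 + 1)

/-- `S ⊆ ℝ^d` is countably `H^n`-rectifiable: up to an `H^n`-null set, `S` is covered by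
countably many Lipschitz images of `ℝ^n`. -/
def CountablyHnRectifiable (n : ℕ) {d : ℕ} (S : Set (EuclideanSpace ℝ (Fin d))) : Prop :=
  ∃ f : ℕ → EuclideanSpace ℝ (Fin n) → EuclideanSpace ℝ (Fin d),
    (∀ i, ∃ K : ℝ≥0, LipschitzWith K (f i)) ∧
    μH[(n : ℝ)] (S \ ⋃ i, Set.range (f i)) = 0

theorem unitBallVol_nonneg (k : ℕ) : 0 ≤ unitBallVol k :=
  div_nonneg (by positivity) (Real.Gamma_pos_of_pos (by positivity)).le

theorem volume_closedBall_eq_unitBallVol {d : ℕ} (hd : 0 < d) (x : EuclideanSpace ℝ (Fin d))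
    {r : ℝ} (hr : 0 ≤ r) :
    volume (closedBall x r) = ENNReal.ofReal (r ^ d * unitBallVol d) := by
  have : Nonempty (Fin d) := ⟨⟨0, hd⟩⟩
  rw [EuclideanSpace.volume_closedBall, ENNReal.ofReal_mul (by positivity),
    ENNReal.ofReal_pow hr, Fintype.card_fin, unitBallVol, Real.sqrt_eq_rpow,
    ← Real.rpow_natCast (Real.pi ^ (1 / 2 : ℝ)) d, ← Real.rpow_mul Real.pi_pos.le]
  congr 4
  ring

theorem packingNumber_ne_top_of_isCompact {X : Type*} [PseudoEMetricSpace X] {A : Set X}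
    (hA : IsCompact A) {ε : ℝ≥0} (hε : ε ≠ 0) : packingNumber (2 * ε) A ≠ ⊤ := by
  obtain ⟨C, -, hCfin, hC⟩ := exists_finite_isCover_of_isCompact hε hA
  refine ne_top_of_le_ne_top (Set.encard_ne_top_iff.2 hCfin) ?_
  exact (packingNumber_two_mul_le_externalCoveringNumber ε A).trans
    hC.externalCoveringNumber_le_encard

/-- Upper bound for the volume of small tubular neighborhoods:
`H^d(S_{⊕r}) ≤ (η(ℝ^d)/γ) 2^n 4^d b_d r^{d-n}` for `0 < r < 2`. -/
theorem volume_cthickening_le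
    (d n : ℕ) (hn : 1 ≤ n) (hnd : n < d)
    (S : Set (EuclideanSpace ℝ (Fin d))) (hS : IsCompact S)
    (hrect : CountablyHnRectifiable n S)
    (γ : ℝ) (hγ : 0 < γ)
    (η : Measure (EuclideanSpace ℝ (Fin d))) [IsFiniteMeasure η]
    (hη_ac : η ≪ μH[(n : ℝ)])
    (hη : ∀ x ∈ S, ∀ r ∈ Set.Ioo (0 : ℝ) 1,
      ENNReal.ofReal (γ * r ^ n) ≤ η (closedBall x r)) :
    ∀ r : ℝ, 0 < r → r < 2 →
      volume (cthickening r S) ≤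
        η Set.univ / ENNReal.ofReal γ *
          ENNReal.ofReal (2 ^ n * 4 ^ d * unitBallVol d * r ^ (d - n)) := by
  intro r hr hr2
  -- Write `r = 2 ε`; `ε` is the radius of the disjoint balls.
  obtain ⟨ε, rfl⟩ : ∃ ε : ℝ≥0, 2 * (ε : ℝ) = r :=
    ⟨(r / 2).toNNReal, by rw [Real.coe_toNNReal _ (by positivity)]; ring⟩
  have hε : (0 : ℝ) < ε := by linarith
  have hpack := packingNumber_ne_top_of_isCompact hS (ε := ε) (by exact_mod_cast hε.ne')
  set N := maximalSeparatedSet (2 * ε) S with hN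
  have hNS : N ⊆ S := maximalSeparatedSet_subset
  have hNsep : IsSeparated (2 * ε : ℝ≥0) N := isSeparated_maximalSeparatedSet
  have hNcov : IsCover (2 * ε) S N := isCover_maximalSeparatedSet hpack
  have hNfin : N.Finite := by
    rw [← Set.encard_ne_top_iff, hN, encard_maximalSeparatedSet hpack]
    exact hpack
  clear_value N
  lift N to Finset (EuclideanSpace ℝ (Fin d)) using hNfin
  -- The balls of radius `ε` around the points of `N` are disjoint, hence `#N * γ ε ^ n ≤ η univ`.
  have hcard : (N.card : ℝ≥0∞) * ENNReal.ofReal (γ * (ε : ℝ) ^ n) ≤ η univ := by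
    calc (N.card : ℝ≥0∞) * ENNReal.ofReal (γ * (ε : ℝ) ^ n)
        = ∑ x ∈ N, ENNReal.ofReal (γ * (ε : ℝ) ^ n) := by simp
      _ ≤ ∑ x ∈ N, η (closedBall x ε) :=
          Finset.sum_le_sum fun x hx ↦ hη x (hNS hx) ε ⟨hε, by linarith⟩
      _ ≤ η univ := by
          refine sum_measure_le_measure_univ
            (fun x _ ↦ isClosed_closedBall.measurableSet.nullMeasurableSet) ?_
          intro x hx y hy hxy
          refine (closedBall_disjoint_closedBall ?_).aedisjoint
          have h : ((2 * ε : ℝ≥0) : ℝ≥0∞) < edist x y := hNsep hx hy hxy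
          rw [edist_nndist, ENNReal.coe_lt_coe, ← NNReal.coe_lt_coe, coe_nndist] at h
          push_cast at h
          linarith
  -- The concentric balls of radius `4 ε` cover the `2 ε`-neighbourhood of `S`.
  have hsub : cthickening (2 * (ε : ℝ)) S ⊆ ⋃ x ∈ N, closedBall x (4 * (ε : ℝ)) := by
    rw [hS.cthickening_eq_biUnion_closedBall hr.le]
    rw [isCover_iff_subset_iUnion_closedBall] at hNcov
    intro z hz
    simp only [mem_iUnion, mem_closedBall, exists_prop] at hz ⊢
    obtain ⟨y, hyS, hzy⟩ := hz
    have hy := hNcov hyS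
    simp only [mem_iUnion, mem_closedBall, exists_prop] at hy
    obtain ⟨x, hxN, hyx⟩ := hy
    push_cast at hyx
    exact ⟨x, hxN, by linarith [dist_triangle z y x]⟩
  have hvol : volume (cthickening (2 * (ε : ℝ)) S) ≤
      (N.card : ℝ≥0∞) * ENNReal.ofReal ((4 * (ε : ℝ)) ^ d * unitBallVol d) := by
    calc volume (cthickening (2 * (ε : ℝ)) S)
        ≤ volume (⋃ x ∈ N, closedBall x (4 * (ε : ℝ))) := measure_mono hsub
      _ ≤ ∑ x ∈ N, volume (closedBall x (4 * (ε : ℝ))) := measure_biUnion_finset_le _ _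
      _ = _ := by simp [volume_closedBall_eq_unitBallVol (by omega : 0 < d) _
          (by positivity : (0 : ℝ) ≤ 4 * ε)]
  have hb : 0 ≤ unitBallVol d := unitBallVol_nonneg d
  have hγ0 : ENNReal.ofReal γ ≠ 0 := by simpa using hγ
  have hcard' : (N.card : ℝ≥0∞) * ENNReal.ofReal ((ε : ℝ) ^ n) ≤ η univ / ENNReal.ofReal γ := by
    rw [ENNReal.le_div_iff_mul_le (Or.inl hγ0) (Or.inl ENNReal.ofReal_ne_top), mul_assoc,
      ← ENNReal.ofReal_mul (by positivity), mul_comm _ γ]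
    exact hcard
  have hpow : (ε : ℝ) ^ d = (ε : ℝ) ^ n * (ε : ℝ) ^ (d - n) := by
    rw [← pow_add]; congr 1; omega
  have hp : (1 : ℝ) ≤ 2 ^ n * 2 ^ (d - n) :=
    one_le_mul_of_one_le_of_one_le (one_le_pow₀ (by norm_num)) (one_le_pow₀ (by norm_num))
  calc volume (cthickening (2 * (ε : ℝ)) S)
      ≤ (N.card : ℝ≥0∞) * ENNReal.ofReal ((4 * (ε : ℝ)) ^ d * unitBallVol d) := hvol
    _ = (N.card : ℝ≥0∞) * ENNReal.ofReal ((ε : ℝ) ^ n) *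
          ENNReal.ofReal (4 ^ d * unitBallVol d * (ε : ℝ) ^ (d - n)) := by
        rw [mul_assoc, ← ENNReal.ofReal_mul (by positivity), mul_pow, hpow]
        congr 2
        ring
    _ ≤ _ := by
        refine mul_le_mul' hcard' (ENNReal.ofReal_le_ofReal ?_)
        have h0 : 0 ≤ 4 ^ d * unitBallVol d * (ε : ℝ) ^ (d - n) := by positivity
        calc 4 ^ d * unitBallVol d * (ε : ℝ) ^ (d - n)
            ≤ (2 ^ n * 2 ^ (d - n)) * (4 ^ d * unitBallVol d * (ε : ℝ) ^ (d - n)) :=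
              le_mul_of_one_le_left h0 hp
          _ = _ := by rw [mul_pow]; ring
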